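/- Let ω : [0,1) → (0,∞) be a continuous function satisfying lim_{s→0⁺} s^α · log(ω(e^{−s})) = 0 for every α > 0. Fix s₀ < 0 and β ∈ (0,1), and for m > 0 set s₁(m) = s₀/m^β and s₂(m) = 2·s₀/m^β. Then lim_{m→∞} (1/m^{1−β}) · [ ((s₂(m)−s₀)/(s₁(m)−s₀)) · log(ω(e^{s₁(m)})) − (1 − (s₂(m)−s₀)/(s₁(m)−s₀)) · m ] = −1. In particular, for every c ∈ (0,1) there exists m₀ > 0 such that for all m > m₀: ((s₂(m)−s₀)/(s₁(m)−s₀)) · log(ω(e^{s₁(m)})) − (1 − (s₂(m)−s₀)/(s₁(m)−s₀)) · m ≤ −c·m^{1−β}. -/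

import Mathlib

open Real Filter

/-!
Put `y = m ^ β` and `z = m ^ (1 - β)`, so that `m = y * z`. The ratio
`(s₂ - s₀) / (s₁ - s₀)` equals `(1 - 2 / y) / (1 - 1 / y)`, which tends to `1` and differs from `1`
by `-1 / (y - 1)`. After division by `z` the term containing `m` therefore tends to `-1`, while
the `ω`-condition with exponent `(1 - β) / β`, taken along `s = -s₀ / y`, kills the logarithm,
because `s ^ ((1 - β) / β)` is a constant multiple of `1 / z`.
-/

open scoped Topology

section Extrapolation

theorem mul_div_sub_self_div_div_sub_self {K : Type*} [Field K] {a : K} (ha : a ≠ 0) (k y : K) :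
    (k * a / y - a) / (a / y - a) = (1 - k / y) / (1 - 1 / y) := by
  rw [show k * a / y - a = -a * (1 - k / y) by ring, show a / y - a = -a * (1 - 1 / y) by ring,
    mul_div_mul_left _ _ (neg_ne_zero.2 ha)]

theorem one_sub_one_sub_div_div_one_sub_one_div {K : Type*} [Field K] {y : K} (hy₀ : y ≠ 0)
    (hy₁ : y ≠ 1) (k : K) :
    1 - (1 - k / y) / (1 - 1 / y) = (k - 1) / (1 - 1 / y) / y := by
  have hy : y - 1 ≠ 0 := sub_ne_zero.2 hy₁
  have hden : 1 - 1 / y ≠ 0 := by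
    rw [one_sub_div hy₀]
    exact div_ne_zero hy hy₀
  rw [one_sub_div hden, div_right_comm]
  ring

variable {ι : Type*} {l : Filter ι} {y z L : ι → ℝ} {a ℓ : ℝ}

theorem tendsto_one_sub_div_atTop (hy : Tendsto y l atTop) (k : ℝ) :
    Tendsto (fun i => 1 - k / y i) l (𝓝 1) := by
  simpa only [sub_zero] using (hy.const_div_atTop k).const_sub 1

theorem tendsto_affine_extrapolation (ha : a ≠ 0) (k : ℝ) (hy : Tendsto y l atTop)
    (hz : ∀ᶠ i in l, z i ≠ 0) (hL : Tendsto (fun i => L i / z i) l (𝓝 ℓ)) :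
    Tendsto
      (fun i => (1 / z i) *
        ((k * a / y i - a) / (a / y i - a) * L i
          - (1 - (k * a / y i - a) / (a / y i - a)) * (y i * z i)))
      l (𝓝 (ℓ - (k - 1))) := by
  have hden : Tendsto (fun i => 1 - 1 / y i) l (𝓝 1) := tendsto_one_sub_div_atTop hy 1
  have hratio : Tendsto (fun i => (1 - k / y i) / (1 - 1 / y i)) l (𝓝 1) := by
    simpa only [div_one] using! (tendsto_one_sub_div_atTop hy k).div hden one_ne_zero
  have hcorr : Tendsto (fun i => (k - 1) / (1 - 1 / y i)) l (𝓝 (k - 1)) := by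
    simpa only [div_one] using! tendsto_const_nhds.div hden one_ne_zero
  have hlim := (hratio.mul hL).sub hcorr
  rw [one_mul] at hlim
  refine hlim.congr' ?_
  filter_upwards [hz, hy.eventually_gt_atTop 1] with i hzi hyi
  have hyi₀ : y i ≠ 0 := (zero_lt_one.trans hyi).ne'
  rw [mul_div_sub_self_div_div_sub_self ha,
    one_sub_one_sub_div_div_one_sub_one_div hyi₀ hyi.ne']
  field_simp

theorem tendsto_comp_div_div_rpow {φ : ℝ → ℝ} {α : ℝ} (ha : a < 0) (hy : Tendsto y l atTop)
    (hφ : Tendsto (fun s => s ^ α * φ (-s)) (𝓝[>] 0) (𝓝 ℓ)) :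
    Tendsto (fun i => φ (a / y i) / y i ^ α) l (𝓝 (ℓ / (-a) ^ α)) := by
  have ha' : 0 < -a := neg_pos.2 ha
  have hs : Tendsto (fun i => -a / y i) l (𝓝[>] 0) :=
    tendsto_nhdsWithin_iff.2 ⟨hy.const_div_atTop (-a),
      (hy.eventually_gt_atTop 0).mono fun _ hyi => div_pos ha' hyi⟩
  refine ((hφ.comp hs).div_const ((-a) ^ α)).congr' ?_
  filter_upwards [hy.eventually_gt_atTop 0] with i hyi
  have hpow : (-a) ^ α ≠ 0 := (rpow_pos_of_pos ha' α).ne'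
  simp only [Function.comp_apply]
  rw [div_rpow ha'.le hyi.le, neg_div, neg_neg]
  field_simp

end Extrapolation

theorem exists_forall_gt_le_mul_of_tendsto {F g : ℝ → ℝ} {ℓ c : ℝ}
    (hg : ∀ᶠ m in atTop, 0 < g m) (hF : Tendsto (fun m => (1 / g m) * F m) atTop (𝓝 ℓ))
    (hc : ℓ < c) : ∃ m₀ > (0 : ℝ), ∀ m > m₀, F m ≤ c * g m := by
  obtain ⟨M, hM⟩ := eventually_atTop.1 (hg.and (hF.eventually_lt_const hc))
  refine ⟨max M 1, by positivity, fun m hm => ?_⟩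
  obtain ⟨hgm, hlt⟩ := hM m ((le_max_left M 1).trans hm.le)
  rw [one_div_mul_eq_div, div_lt_iff₀ hgm] at hlt
  exact hlt.le

theorem affine_bound_limit_general {φ : ℝ → ℝ} {s₀ β ℓ : ℝ} (k : ℝ) (hs₀ : s₀ < 0) (hβ : 0 < β)
    (hφ : Tendsto (fun s => s ^ ((1 - β) / β) * φ (-s)) (𝓝[>] 0) (𝓝 ℓ)) :
    Tendsto
        (fun m : ℝ =>
          (1 / m ^ (1 - β)) *
            (((k * s₀ / m ^ β - s₀) / (s₀ / m ^ β - s₀)) * φ (s₀ / m ^ β)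
              - (1 - (k * s₀ / m ^ β - s₀) / (s₀ / m ^ β - s₀)) * m))
        atTop (𝓝 (ℓ / (-s₀) ^ ((1 - β) / β) - (k - 1)))
    ∧ ∀ c < k - 1 - ℓ / (-s₀) ^ ((1 - β) / β), ∃ m₀ > (0 : ℝ), ∀ m > m₀,
        ((k * s₀ / m ^ β - s₀) / (s₀ / m ^ β - s₀)) * φ (s₀ / m ^ β)
            - (1 - (k * s₀ / m ^ β - s₀) / (s₀ / m ^ β - s₀)) * m
          ≤ -(c * m ^ (1 - β)) := by
  have hy : Tendsto (fun m : ℝ => m ^ β) atTop atTop := tendsto_rpow_atTop hβ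
  have hz : ∀ᶠ m : ℝ in atTop, 0 < m ^ (1 - β) :=
    (eventually_gt_atTop 0).mono fun m hm => rpow_pos_of_pos hm _
  have hL : Tendsto (fun m : ℝ => φ (s₀ / m ^ β) / m ^ (1 - β)) atTop
      (𝓝 (ℓ / (-s₀) ^ ((1 - β) / β))) := by
    refine (tendsto_comp_div_div_rpow hs₀ hy hφ).congr' ?_
    filter_upwards [eventually_ge_atTop 0] with m hm
    rw [← rpow_mul hm, mul_div_cancel₀ _ hβ.ne']
  have hz₀ : ∀ᶠ m : ℝ in atTop, m ^ (1 - β) ≠ 0 := hz.mono fun _ hm => hm.ne'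
  have hlim := (tendsto_affine_extrapolation hs₀.ne k hy hz₀ hL).congr' <| by
    filter_upwards [eventually_gt_atTop 0] with m hm
    rw [← rpow_add hm, add_sub_cancel, rpow_one]
  refine ⟨hlim, fun c hc => ?_⟩
  simpa only [neg_mul] using
    exists_forall_gt_le_mul_of_tendsto hz hlim (c := -c) (by linarith)

theorem affine_bound_limit
    (ω : ℝ → ℝ) (hωcont : ContinuousOn ω (Set.Ico 0 1))
    (hωpos : ∀ r ∈ Set.Ico (0:ℝ) 1, 0 < ω r)
    (hωcond : ∀ α > (0:ℝ),
      Tendsto (fun s : ℝ => s ^ α * Real.log (ω (Real.exp (-s))))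
        (nhdsWithin 0 (Set.Ioi 0)) (nhds 0))
    (s₀ β : ℝ) (hs₀ : s₀ < 0) (hβ : β ∈ Set.Ioo (0:ℝ) 1) :
    (Tendsto
        (fun m : ℝ =>
          (1 / m ^ (1 - β)) *
            (((2 * s₀ / m ^ β - s₀) / (s₀ / m ^ β - s₀)) * Real.log (ω (Real.exp (s₀ / m ^ β)))
              - (1 - (2 * s₀ / m ^ β - s₀) / (s₀ / m ^ β - s₀)) * m))
        atTop (nhds (-1)))
    ∧ ∀ c ∈ Set.Ioo (0:ℝ) 1, ∃ m₀ > (0:ℝ), ∀ m > m₀,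
        ((2 * s₀ / m ^ β - s₀) / (s₀ / m ^ β - s₀)) * Real.log (ω (Real.exp (s₀ / m ^ β)))
            - (1 - (2 * s₀ / m ^ β - s₀) / (s₀ / m ^ β - s₀)) * m
          ≤ -(c * m ^ (1 - β)) := by
  obtain ⟨hlim, hbound⟩ := affine_bound_limit_general (φ := fun s => log (ω (exp s))) 2 hs₀ hβ.1
    (hωcond _ (div_pos (sub_pos.2 hβ.2) hβ.1))
  exact ⟨by convert hlim using 2; norm_num, fun c hc => hbound c (by norm_num [hc.2])⟩
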